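/- (Lemma 4.3, energy estimate for the relaxation–transport half steps.) Let 0 < ε < 1, λ > 0, Δt > 0, and let k and N_v be natural numbers. Let rⁿ* (denoted r*), jⁿ, j*, and r^{n+1} be functions Ω_x × ℝ → ℝ of discrete ansatz form satisfying, for every v ∈ ℝ: (i) ((j*(·,v) − jⁿ(·,v))/Δt, η) = −(λ/ε²)(j*(·,v), η) − ((1−ε²)/ε²) · v · L⁺(r*(·,v), η) for all η ∈ V_h^k, and (ii) ((r^{n+1}(·,v) − r*(·,v))/Δt, ξ) + v · L⁻(j*(·,v), ξ) = 0 for all ξ ∈ V_h^k. Then there exist positive constants C_i and C_t, depending only on k (and independent of h, Δt, ε, λ, N_v and the data), such that whenever the CFL condition Δt/h² ≤ λ/((1−ε²)(C_i + 4C_t²)(2N_v+1)) holds, one has |||r^{n+1}|||² + (ε²/(1−ε²)) |||j*|||² ≤ |||r*|||² + (ε²/(1−ε²)) |||jⁿ|||². -/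

import Mathlib

noncomputable section

open Polynomial MeasureTheory

namespace APDG

/-- Mesh size `h = 1/N` of the uniform partition of `Ω_x = [0,1]` into `N` cells. -/
def msize (N : ℕ) : ℝ := 1 / N

/-- A piecewise-polynomial function on the uniform mesh of `[0,1]` with `N` cells, recorded
by its polynomial on each cell `I_i = [i·h, (i+1)·h]` (indexed by `i : Fin N`). -/
abbrev PW (N : ℕ) := Fin N → Polynomial ℝ

/-- Membership in `V_h^k`: on each cell the polynomial has degree at most `k`. -/
def degLE (k : ℕ) {N : ℕ} (u : PW N) : Prop := ∀ i, (u i).degree ≤ (k : ℕ)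

/-- The one-sided limit `u⁺_{i-1/2}` from cell `I_i` at the interface `x_{i-1/2} = i·h`. -/
def uplus {N : ℕ} (u : PW N) (i : Fin N) : ℝ := (u i).eval ((i.val : ℝ) * msize N)

/-- The index `i - 1` modulo `N` (periodic boundary conditions). -/
def prevIdx {N : ℕ} (i : Fin N) : Fin N := ⟨(i.val + (N - 1)) % N, Nat.mod_lt _ i.pos⟩

/-- The one-sided limit `u⁻_{i-1/2}` from cell `I_{i-1}` at the interface `x_{i-1/2}`,
with periodic identification of cell indices modulo `N` (so for `i = 0` it is the value of
the polynomial of the last cell at the right endpoint `1`). -/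
def uminus {N : ℕ} (u : PW N) (i : Fin N) : ℝ :=
  (u (prevIdx i)).eval ((((prevIdx i).val : ℝ) + 1) * msize N)

/-- The jump `[u]_{i-1/2} = u⁺_{i-1/2} − u⁻_{i-1/2}`. -/
def jump {N : ℕ} (u : PW N) (i : Fin N) : ℝ := uplus u i - uminus u i

/-- The `L²(Ω_x)` inner product `(u,w) = ∫_{Ω_x} u w dx`, computed cell by cell. -/
def inner2 {N : ℕ} (u w : PW N) : ℝ :=
  ∑ i : Fin N,
    ∫ x in ((i.val : ℝ) * msize N)..(((i.val : ℝ) + 1) * msize N), (u i).eval x * (w i).eval x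

/-- `L⁺(ψ,u) = −∫_{Ω_x} ψ ∂ₓu dx − Σ_i ψ⁺_{i-1/2}[u]_{i-1/2}`. -/
def Lplus {N : ℕ} (ψ u : PW N) : ℝ :=
  - inner2 ψ (fun i => derivative (u i)) - ∑ i : Fin N, uplus ψ i * jump u i

/-- `L⁻(ψ,u) = −∫_{Ω_x} ψ ∂ₓu dx − Σ_i ψ⁻_{i-1/2}[u]_{i-1/2}`. -/
def Lminus {N : ℕ} (ψ u : PW N) : ℝ :=
  - inner2 ψ (fun i => derivative (u i)) - ∑ i : Fin N, uminus ψ i * jump u i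

/-- The one-dimensional normalized Maxwellian `M(v) = (2π)^{-1/2} exp(-v²/2)`. -/
def Mw (v : ℝ) : ℝ := (Real.sqrt (2 * Real.pi))⁻¹ * Real.exp (-(v ^ 2) / 2)

/-- The coefficient data of a function of *discrete ansatz form*
`f(x,v) = M(v) Σ_{ℓ=0}^{N_v} c_ℓ(x) v^ℓ`, with each `c_ℓ` piecewise polynomial. -/
abbrev Ansatz (N Nv : ℕ) := Fin (Nv + 1) → PW N

/-- All coefficients of the ansatz belong to `V_h^k`. -/
def AdegLE (k : ℕ) {N Nv : ℕ} (c : Ansatz N Nv) : Prop := ∀ ℓ, degLE k (c ℓ)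

/-- For fixed velocity `v`, the element `f(·,v) ∈ V_h^k` of an ansatz-form function:
on cell `i` it is the polynomial `M(v) Σ_ℓ v^ℓ c_ℓ`. -/
def aAt {N Nv : ℕ} (c : Ansatz N Nv) (v : ℝ) : PW N :=
  fun i => Polynomial.C (Mw v) * ∑ ℓ : Fin (Nv + 1), Polynomial.C (v ^ (ℓ : ℕ)) * c ℓ i

/-- The squared weighted phase-space norm
`|||f|||² = ∫_{Ω_x} ∫_ℝ f(x,v)² (λ/M(v)) dv dx` of an ansatz-form function. -/
def nrmSq {N Nv : ℕ} (lam : ℝ) (c : Ansatz N Nv) : ℝ :=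
  ∑ i : Fin N,
    ∫ x in ((i.val : ℝ) * msize N)..(((i.val : ℝ) + 1) * msize N),
      ∫ v : ℝ, ((aAt c v i).eval x) ^ 2 * (lam / Mw v)

/-! ### Gaussian expectation of polynomials -/

theorem Mw_pos (v : ℝ) : 0 < Mw v := by
  unfold Mw
  positivity

theorem hasDerivAt_Mw (v : ℝ) : HasDerivAt Mw (-v * Mw v) v := by
  have h : HasDerivAt (fun v : ℝ => -(v ^ 2) / 2) (-v) v := by
    refine ((hasDerivAt_pow 2 v).neg.div_const 2).congr_deriv ?_
    norm_num
    ring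
  refine (h.exp.const_mul (Real.sqrt (2 * Real.pi))⁻¹).congr_deriv ?_
  unfold Mw
  ring

theorem integrable_eval_mul_Mw (p : ℝ[X]) : Integrable fun v : ℝ => p.eval v * Mw v := by
  induction p using Polynomial.induction_on' with
  | add p q hp hq =>
    simp only [eval_add, add_mul]
    exact hp.add hq
  | monomial n a =>
    have h := integrable_rpow_mul_exp_neg_mul_sq (b := 1 / 2) (by norm_num)
      (s := (n : ℝ)) (by linarith [(Nat.cast_nonneg n : (0 : ℝ) ≤ n)])
    refine (h.const_mul (a * (Real.sqrt (2 * Real.pi))⁻¹)).congr (ae_of_all _ fun v => ?_)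
    have : -(1 / 2) * v ^ 2 = -(v ^ 2) / 2 := by ring
    simp only [eval_monomial, Mw, Real.rpow_natCast, this]
    ring

/-- The expectation of a polynomial under the standard Gaussian density. -/
def gaussianMean : ℝ[X] →ₗ[ℝ] ℝ where
  toFun p := ∫ v : ℝ, p.eval v * Mw v
  map_add' p q := by
    simp only [eval_add, add_mul]
    exact integral_add (integrable_eval_mul_Mw p) (integrable_eval_mul_Mw q)
  map_smul' a p := by
    simp only [eval_smul, smul_eq_mul, mul_assoc, RingHom.id_apply]
    exact integral_const_mul _ _

theorem gaussianMean_apply (p : ℝ[X]) : gaussianMean p = ∫ v : ℝ, p.eval v * Mw v := rfl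

theorem gaussianMean_nonneg {p : ℝ[X]} (hp : ∀ v, 0 ≤ p.eval v) : 0 ≤ gaussianMean p :=
  integral_nonneg fun v => mul_nonneg (hp v) (Mw_pos v).le

theorem gaussianMean_sq_nonneg (p : ℝ[X]) : 0 ≤ gaussianMean (p ^ 2) :=
  gaussianMean_nonneg fun v => by
    rw [eval_pow]
    positivity

/-- Gaussian integration by parts. -/
theorem gaussianMean_X_mul (p : ℝ[X]) : gaussianMean (X * p) = gaussianMean (derivative p) := by
  have hd (v : ℝ) : HasDerivAt (fun v => p.eval v * Mw v)
      ((derivative p - X * p).eval v * Mw v) v := by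
    refine ((p.hasDerivAt v).mul (hasDerivAt_Mw v)).congr_deriv ?_
    simp only [eval_sub, eval_mul, eval_X]
    ring
  have h := integral_eq_zero_of_hasDerivAt_of_integrable hd
    (integrable_eval_mul_Mw _) (integrable_eval_mul_Mw p)
  rw [← gaussianMean_apply, map_sub] at h
  linarith

theorem gaussianMean_C_mul (a : ℝ) (p : ℝ[X]) : gaussianMean (C a * p) = a * gaussianMean p := by
  rw [← smul_eq_C_mul, map_smul, smul_eq_mul]

theorem gaussianMean_mul_ornsteinUhlenbeck (q p : ℝ[X]) :
    gaussianMean (q * (X * derivative p - derivative (derivative p))) =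
      gaussianMean (derivative q * derivative p) := by
  have h := gaussianMean_X_mul (q * derivative p)
  rw [derivative_mul, map_add] at h
  rw [mul_sub, map_sub, mul_left_comm, h]
  ring

theorem gaussianMean_derivative_sq_le (n : ℕ) (p : ℝ[X]) (hp : p.natDegree ≤ n) :
    gaussianMean (derivative p ^ 2) ≤ n * gaussianMean (p ^ 2) := by
  induction n generalizing p with
  | zero =>
    rw [derivative_of_natDegree_zero (Nat.le_zero.mp hp)]
    simp
  | succ n ih =>
    have ih' := ih (derivative p) ((natDegree_derivative_le p).trans (by omega))
    set A := X * derivative p - derivative (derivative p) with hA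
    have hpA : gaussianMean (p * A) = gaussianMean (derivative p ^ 2) := by
      rw [hA, gaussianMean_mul_ornsteinUhlenbeck, sq]
    have hAA : gaussianMean (A ^ 2) =
        gaussianMean (derivative p ^ 2) + gaussianMean (derivative (derivative p) ^ 2) := by
      have hdA : derivative A = derivative p +
          (X * derivative (derivative p) - derivative (derivative (derivative p))) := by
        simp only [hA, derivative_sub, derivative_mul, derivative_X]
        ring
      rw [sq, show A * A = A * (X * derivative p - derivative (derivative p)) by rw [hA],
        gaussianMean_mul_ornsteinUhlenbeck, hdA, add_mul, map_add,
        mul_comm (X * _ - _) (derivative p), gaussianMean_mul_ornsteinUhlenbeck, sq, sq]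
    have h0 := gaussianMean_sq_nonneg (C ((n : ℝ) + 1) * p - A)
    have hexp : (C ((n : ℝ) + 1) * p - A) ^ 2 =
        C (((n : ℝ) + 1) ^ 2) * p ^ 2 - C (2 * ((n : ℝ) + 1)) * (p * A) + A ^ 2 := by
      simp only [map_mul, map_pow, map_ofNat]
      ring
    rw [hexp, map_add, map_sub, gaussianMean_C_mul, gaussianMean_C_mul, hpA, hAA] at h0
    have hn : (0 : ℝ) < n + 1 := by positivity
    push_cast
    refine le_of_mul_le_mul_left ?_ hn
    nlinarith

/-- Multiplication by the velocity is bounded on polynomials of bounded degree. -/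
theorem gaussianMean_X_sq_mul_sq_le (n : ℕ) (p : ℝ[X]) (hp : p.natDegree ≤ n) :
    gaussianMean (p ^ 2 * X ^ 2) ≤ 2 * (2 * n + 1) * gaussianMean (p ^ 2) := by
  have h1 := gaussianMean_derivative_sq_le n p hp
  have h2 := gaussianMean_sq_nonneg (X * p - C 2 * derivative p)
  have hexp : (X * p - C 2 * derivative p) ^ 2 =
      p ^ 2 * X ^ 2 - C 4 * (X * p * derivative p) + C 4 * derivative p ^ 2 := by
    rw [show (4 : ℝ) = 2 * 2 by norm_num, C_mul, map_ofNat C 2]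
    ring
  have h3 := gaussianMean_X_mul (X * p ^ 2)
  have hder : derivative (X * p ^ 2) = p ^ 2 + C 2 * (X * p * derivative p) := by
    rw [derivative_mul, derivative_X, derivative_sq]
    ring
  rw [hder, map_add, gaussianMean_C_mul, show X * (X * p ^ 2) = p ^ 2 * X ^ 2 by ring] at h3
  rw [hexp, map_add, map_sub, gaussianMean_C_mul, gaussianMean_C_mul] at h2
  linarith

/-! ### Inverse and trace inequalities -/

theorem exists_le_mul_of_homogeneous {E : Type*} [NormedAddCommGroup E] [NormedSpace ℝ E]
    [FiniteDimensional ℝ E] {f g : E → ℝ} (hf : Continuous f) (hg : Continuous g)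
    (hfpos : ∀ a, a ≠ 0 → 0 < f a) (hf2 : ∀ (t : ℝ) a, f (t • a) = t ^ 2 * f a)
    (hg2 : ∀ (t : ℝ) a, g (t • a) = t ^ 2 * g a) :
    ∃ K : ℝ, 0 < K ∧ ∀ a, g a ≤ K * f a := by
  have : ProperSpace E := FiniteDimensional.proper ℝ E
  have hc : ContinuousOn (fun a => g a / f a) (Metric.sphere 0 1) :=
    hg.continuousOn.div hf.continuousOn fun a ha =>
      (hfpos a (ne_zero_of_mem_unit_sphere ⟨a, ha⟩)).ne'
  obtain ⟨K, hK⟩ := ((isCompact_sphere (0 : E) 1).image_of_continuousOn hc).bddAbove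
  refine ⟨max K 1, by positivity, fun a => ?_⟩
  rcases eq_or_ne a 0 with rfl | ha
  · have h1 : f 0 = 0 := by simpa using hf2 0 0
    have h2 : g 0 = 0 := by simpa using hg2 0 0
    rw [h1, h2, mul_zero]
  · have hn : 0 < ‖a‖ := norm_pos_iff.mpr ha
    set b := ‖a‖⁻¹ • a with hb
    have hb1 : ‖b‖ = 1 := by
      rw [hb, norm_smul, norm_inv, norm_norm, inv_mul_cancel₀ hn.ne']
    have hb0 : b ≠ 0 := norm_ne_zero_iff.mp (by rw [hb1]; exact one_ne_zero)
    have hle : g b / f b ≤ K := hK ⟨b, by simp [hb1], rfl⟩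
    have hle' : g b ≤ max K 1 * f b :=
      (div_le_iff₀ (hfpos b hb0)).mp (hle.trans (le_max_left _ _))
    have hab : a = ‖a‖ • b := by
      rw [hb, smul_smul, mul_inv_cancel₀ hn.ne', one_smul]
    rw [hab, hf2, hg2]
    nlinarith [mul_le_mul_of_nonneg_left hle' (sq_nonneg ‖a‖)]

theorem integral_eval_sq_pos {p : ℝ[X]} (hp : p ≠ 0) : 0 < ∫ x in (0 : ℝ)..1, p.eval x ^ 2 := by
  obtain ⟨x, hx, hpx⟩ : ∃ x ∈ Set.Icc (0 : ℝ) 1, p.eval x ≠ 0 := by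
    by_contra! h
    exact hp (eq_zero_of_infinite_isRoot p ((Set.Icc_infinite zero_lt_one).mono h))
  exact intervalIntegral.integral_pos zero_lt_one (by fun_prop) (fun _ _ => sq_nonneg _)
    ⟨x, hx, by positivity⟩

theorem exists_reference_inverse_bound (k : ℕ) :
    ∃ K : ℝ, 0 < K ∧ ∀ p : ℝ[X], p.degree ≤ k →
      (∫ x in (0 : ℝ)..1, (derivative p).eval x ^ 2) ≤ K * ∫ x in (0 : ℝ)..1, p.eval x ^ 2 ∧
      p.eval 0 ^ 2 ≤ K * ∫ x in (0 : ℝ)..1, p.eval x ^ 2 ∧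
      p.eval 1 ^ 2 ≤ K * ∫ x in (0 : ℝ)..1, p.eval x ^ 2 := by
  let P : (Fin (k + 1) → ℝ) → ℝ[X] := fun a => ∑ i, C (a i) * X ^ (i : ℕ)
  have hPsmul (t : ℝ) (a) : P (t • a) = C t * P a := by
    simp only [P, Pi.smul_apply, smul_eq_mul, map_mul, mul_assoc, Finset.mul_sum]
  have hPcoeff (a) (i : Fin (k + 1)) : (P a).coeff i = a i := by
    simp [P, coeff_C_mul, coeff_X_pow, Fin.val_inj]
  have hPne (a) (ha : a ≠ 0) : P a ≠ 0 := by
    intro h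
    exact ha (funext fun i => by simpa [h] using (hPcoeff a i).symm)
  have hPc : Continuous fun z : (Fin (k + 1) → ℝ) × ℝ => (P z.1).eval z.2 := by
    simp only [P, eval_finsetSum, eval_mul, eval_C, eval_pow, eval_X]
    fun_prop
  have hPdc : Continuous fun z : (Fin (k + 1) → ℝ) × ℝ => (derivative (P z.1)).eval z.2 := by
    simp only [P, derivative_sum, derivative_C_mul, derivative_X_pow, eval_finsetSum, eval_mul,
      eval_C, eval_pow, eval_X]
    fun_prop
  have hPe (x : ℝ) : Continuous fun a => (P a).eval x :=
    hPc.comp (Continuous.prodMk_left x)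
  obtain ⟨K, hK, hle⟩ := exists_le_mul_of_homogeneous
    (f := fun a => ∫ x in (0 : ℝ)..1, (P a).eval x ^ 2)
    (g := fun a => (∫ x in (0 : ℝ)..1, (derivative (P a)).eval x ^ 2)
      + (P a).eval 0 ^ 2 + (P a).eval 1 ^ 2)
    (intervalIntegral.continuous_parametric_intervalIntegral_of_continuous' (hPc.pow 2) 0 1)
    (((intervalIntegral.continuous_parametric_intervalIntegral_of_continuous'
      (hPdc.pow 2) 0 1).add ((hPe 0).pow 2)).add ((hPe 1).pow 2))
    (fun a ha => integral_eval_sq_pos (hPne a ha))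
    (fun t a => by
      simp only [hPsmul, eval_mul, eval_C, mul_pow, intervalIntegral.integral_const_mul])
    (fun t a => by
      simp only [hPsmul, derivative_C_mul, eval_mul, eval_C, mul_pow,
        intervalIntegral.integral_const_mul]
      ring)
  refine ⟨K, hK, fun p hp => ?_⟩
  have hPp : P (fun i => p.coeff i) = p := by
    conv_rhs => rw [p.as_sum_range_C_mul_X_pow' (n := k + 1)
      (Nat.lt_succ_of_le (natDegree_le_of_degree_le hp)), Finset.sum_range]
  have h := hle fun i => p.coeff i
  simp only [hPp] at h
  have h1 : 0 ≤ ∫ x in (0 : ℝ)..1, (derivative p).eval x ^ 2 :=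
    intervalIntegral.integral_nonneg zero_le_one fun _ _ => sq_nonneg _
  have h2 := sq_nonneg (p.eval 0)
  have h3 := sq_nonneg (p.eval 1)
  exact ⟨by linarith, by linarith, by linarith⟩

/-- Inverse and trace inequalities on a cell `[a, a + h]`, with a constant depending only on the
polynomial degree. -/
theorem exists_inverse_bound (k : ℕ) :
    ∃ K : ℝ, 0 < K ∧ ∀ p : ℝ[X], p.degree ≤ k → ∀ a b h : ℝ, 0 < h → b = a + h →
      h ^ 2 * (∫ x in a..b, (derivative p).eval x ^ 2) ≤ K * ∫ x in a..b, p.eval x ^ 2 ∧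
      h * p.eval a ^ 2 ≤ K * ∫ x in a..b, p.eval x ^ 2 ∧
      h * p.eval b ^ 2 ≤ K * ∫ x in a..b, p.eval x ^ 2 := by
  obtain ⟨K, hK, hle⟩ := exists_reference_inverse_bound k
  refine ⟨K, hK, fun p hp a b h hh hb => ?_⟩
  subst hb
  set q := p.comp (C h * X + C a) with hq
  have hqe (x : ℝ) : q.eval x = p.eval (h * x + a) := by simp [hq]
  have hqd (x : ℝ) : (derivative q).eval x = h * (derivative p).eval (h * x + a) := by
    simp [hq, derivative_comp]
  have hqdeg : q.degree ≤ k := by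
    refine degree_le_of_natDegree_le (natDegree_comp_le.trans ?_)
    exact (Nat.mul_le_mul (natDegree_le_of_degree_le hp) natDegree_linear_le).trans (by simp)
  have hscale (f : ℝ → ℝ) : h * ∫ x in (0 : ℝ)..1, f (h * x + a) = ∫ x in a..(a + h), f x := by
    rw [intervalIntegral.mul_integral_comp_mul_add]
    simp [add_comm]
  obtain ⟨h1, h2, h3⟩ := hle q hqdeg
  simp only [hqe, hqd, mul_pow, intervalIntegral.integral_const_mul, mul_zero, zero_add,
    mul_one] at h1 h2 h3
  rw [add_comm h a] at h3
  rw [← hscale fun x => p.eval x ^ 2, ← hscale fun x => (derivative p).eval x ^ 2]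
  refine ⟨?_, ?_, ?_⟩
  · nlinarith [mul_le_mul_of_nonneg_left h1 hh.le]
  · nlinarith [mul_le_mul_of_nonneg_left h2 hh.le]
  · nlinarith [mul_le_mul_of_nonneg_left h3 hh.le]

/-! ### The discontinuous Galerkin forms -/

variable {N : ℕ}

theorem msize_pos (hN : 0 < N) : 0 < msize N := by
  unfold msize
  positivity

theorem cell_le (i : Fin N) : (i.val : ℝ) * msize N ≤ ((i.val : ℝ) + 1) * msize N := by
  have := msize_pos i.pos
  nlinarith

theorem prevIdx_bijective : Function.Bijective (prevIdx (N := N)) := by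
  refine Finite.injective_iff_bijective.mp fun i j hij => ?_
  have key (m : Fin N) : (prevIdx m).val = if m.val = 0 then N - 1 else m.val - 1 := by
    have hm := m.isLt
    simp only [prevIdx]
    split_ifs with h
    · rw [h, zero_add, Nat.mod_eq_of_lt (by omega)]
    · rw [show m.val + (N - 1) = m.val - 1 + N by omega, Nat.add_mod_right,
        Nat.mod_eq_of_lt (by omega)]
  have h := congrArg Fin.val hij
  rw [key, key] at h
  have hi := i.isLt
  have hj := j.isLt
  apply Fin.ext
  split_ifs at h <;> omega

theorem sum_comp_prevIdx (f : Fin N → ℝ) : ∑ i, f (prevIdx i) = ∑ i, f i :=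
  prevIdx_bijective.sum_comp f

theorem inner2_sub_left (u w z : PW N) : inner2 (u - w) z = inner2 u z - inner2 w z := by
  simp only [inner2, Pi.sub_apply, eval_sub, sub_mul, ← Finset.sum_sub_distrib]
  refine Finset.sum_congr rfl fun i _ => intervalIntegral.integral_sub ?_ ?_ <;>
  exact Continuous.intervalIntegrable (by fun_prop) _ _

theorem inner2_comm (u w : PW N) : inner2 u w = inner2 w u := by
  simp only [inner2, mul_comm]

theorem inner2_sub_right (u w z : PW N) : inner2 z (u - w) = inner2 z u - inner2 z w := by
  rw [inner2_comm, inner2_sub_left, inner2_comm u, inner2_comm w]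

theorem inner2_self_nonneg (u : PW N) : 0 ≤ inner2 u u :=
  Finset.sum_nonneg fun i _ =>
    intervalIntegral.integral_nonneg (cell_le i) fun _ _ => mul_self_nonneg _

theorem Lminus_eq_neg_Lplus (u w : PW N) : Lminus u w = -Lplus w u := by
  have hparts : inner2 u (fun i => derivative (w i)) + inner2 w (fun i => derivative (u i)) =
      ∑ i, uminus u i * uminus w i - ∑ i, uplus u i * uplus w i := by
    simp only [inner2, uminus, uplus]
    rw [sum_comp_prevIdx fun i => (u i).eval (((i.val : ℝ) + 1) * msize N) *
      (w i).eval (((i.val : ℝ) + 1) * msize N), ← Finset.sum_add_distrib,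
      ← Finset.sum_sub_distrib]
    refine Finset.sum_congr rfl fun i _ => ?_
    rw [← intervalIntegral.integral_add (Continuous.intervalIntegrable (by fun_prop) _ _)
      (Continuous.intervalIntegrable (by fun_prop) _ _),
      ← intervalIntegral.integral_eq_sub_of_hasDerivAt
        (f := fun x => (u i).eval x * (w i).eval x)
        (f' := fun x => (u i).eval x * (derivative (w i)).eval x +
          (w i).eval x * (derivative (u i)).eval x)]
    · intro x _
      refine (((u i).hasDerivAt x).mul ((w i).hasDerivAt x)).congr_deriv ?_
      ring
    · exact Continuous.intervalIntegrable (by fun_prop) _ _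
  have hjump : ∑ i, uminus u i * jump w i + ∑ i, uplus w i * jump u i =
      ∑ i, uplus u i * uplus w i - ∑ i, uminus u i * uminus w i := by
    rw [← Finset.sum_add_distrib, ← Finset.sum_sub_distrib]
    refine Finset.sum_congr rfl fun i _ => ?_
    simp only [jump]
    ring
  simp only [Lminus, Lplus]
  linarith

theorem Lminus_sub_right (u w z : PW N) : Lminus z (u - w) = Lminus z u - Lminus z w := by
  have hd : (fun i => derivative ((u - w) i)) =
      (fun i => derivative (u i)) - fun i => derivative (w i) := by
    funext i
    simp
  have hj : ∑ i, uminus z i * jump (u - w) i =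
      ∑ i, uminus z i * jump u i - ∑ i, uminus z i * jump w i := by
    rw [← Finset.sum_sub_distrib]
    refine Finset.sum_congr rfl fun i _ => ?_
    simp only [jump, uplus, uminus, Pi.sub_apply, eval_sub]
    ring
  simp only [Lminus, hd, inner2_sub_right, hj]
  ring

theorem degLE_sub {k : ℕ} {u w : PW N} (hu : degLE k u) (hw : degLE k w) : degLE k (u - w) :=
  fun i => (degree_sub_le _ _).trans (max_le (hu i) (hw i))

theorem mul_le_weighted {A : ℝ} (hA : 0 < A) (x y : ℝ) : x * y ≤ (A * x ^ 2 + y ^ 2 / A) / 2 := by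
  have h : (A * x ^ 2 + y ^ 2 / A) / 2 - x * y = (A * x - y) ^ 2 / (2 * A) := by
    field_simp
    ring
  have : 0 ≤ (A * x - y) ^ 2 / (2 * A) := by positivity
  linarith

/-- Boundedness of the upwind form on `V_h^k`, in Young's inequality form. -/
theorem exists_neg_Lminus_le (k : ℕ) :
    ∃ D : ℝ, 0 < D ∧ ∀ (N : ℕ), 0 < N → ∀ (g w : PW N), degLE k g → degLE k w → ∀ τ : ℝ,
      -(τ * Lminus g w) ≤
        (inner2 w w + D * τ ^ 2 / msize N ^ 2 * inner2 g g) / 2 := by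
  obtain ⟨K, hK, hle⟩ := exists_inverse_bound k
  refine ⟨3 * K * (1 + 2 * K), by positivity, fun N hN g w hg hw τ => ?_⟩
  have hh := msize_pos hN
  set h := msize N with hhdef
  have hcell (i : Fin N) : ((i.val : ℝ) + 1) * h = i.val * h + h := by ring
  have hdw : h ^ 2 * inner2 (fun i => derivative (w i)) (fun i => derivative (w i)) ≤
      K * inner2 w w := by
    simp only [inner2, Finset.mul_sum, ← sq]
    exact Finset.sum_le_sum fun i _ => (hle _ (hw i) _ _ h hh (hcell i)).1
  have hplus (u : PW N) (hu : degLE k u) : h * ∑ i, uplus u i ^ 2 ≤ K * inner2 u u := by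
    simp only [inner2, Finset.mul_sum, ← sq]
    exact Finset.sum_le_sum fun i _ => (hle _ (hu i) _ _ h hh (hcell i)).2.1
  have hminus (u : PW N) (hu : degLE k u) : h * ∑ i, uminus u i ^ 2 ≤ K * inner2 u u := by
    simp only [uminus]
    rw [sum_comp_prevIdx fun i => (u i).eval (((i.val : ℝ) + 1) * msize N) ^ 2]
    simp only [inner2, Finset.mul_sum, ← sq]
    exact Finset.sum_le_sum fun i _ => (hle _ (hu i) _ _ h hh (hcell i)).2.2
  have hA : (0 : ℝ) < 3 * K := by positivity
  have hvol : τ * inner2 g (fun i => derivative (w i)) ≤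
      (3 * K * (τ / h) ^ 2 * inner2 g g +
        h ^ 2 * inner2 (fun i => derivative (w i)) (fun i => derivative (w i)) / (3 * K)) / 2 := by
    simp only [inner2, Finset.mul_sum, Finset.sum_div, ← Finset.sum_add_distrib]
    refine Finset.sum_le_sum fun i _ => ?_
    simp only [← intervalIntegral.integral_const_mul, ← intervalIntegral.integral_div]
    rw [← intervalIntegral.integral_add (Continuous.intervalIntegrable (by fun_prop) _ _)
      (Continuous.intervalIntegrable (by fun_prop) _ _), ← intervalIntegral.integral_div]
    refine intervalIntegral.integral_mono_on (cell_le i)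
      (Continuous.intervalIntegrable (by fun_prop) _ _)
      (Continuous.intervalIntegrable (by fun_prop) _ _) fun x _ => ?_
    have := mul_le_weighted hA (τ / h * (g i).eval x) (h * (derivative (w i)).eval x)
    convert this using 1
    · field_simp
    · ring
  have hface (a b : Fin N → ℝ) : τ * ∑ i, a i * b i ≤
      (3 * K * (τ / h) ^ 2 * (h * ∑ i, a i ^ 2) + h * (∑ i, b i ^ 2) / (3 * K)) / 2 := by
    simp only [Finset.mul_sum, Finset.sum_div, ← Finset.sum_add_distrib]
    refine Finset.sum_le_sum fun i _ => ?_
    have := mul_le_mul_of_nonneg_left (mul_le_weighted hA (τ / h * a i) (b i)) hh.le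
    convert this using 1
    · field_simp
    · ring
  have hfp := hface (uminus g) (uplus w)
  have hfm := hface (uminus g) fun i => -uminus w i
  have hsplit : ∑ i, uminus g i * jump w i =
      ∑ i, uminus g i * uplus w i + ∑ i, uminus g i * -uminus w i := by
    rw [← Finset.sum_add_distrib]
    refine Finset.sum_congr rfl fun i _ => ?_
    simp only [jump]
    ring
  simp only [neg_sq] at hfm
  have hdiv {y : ℝ} (hy : y ≤ K * inner2 w w) : y / (3 * K) ≤ inner2 w w / 3 := by
    rw [div_le_iff₀ hA]
    linarith
  have e1 := hdiv hdw
  have e2 := hdiv (hplus w hw)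
  have e3 := hdiv (hminus w hw)
  have e4 := mul_le_mul_of_nonneg_left (hminus g hg) (by positivity : 0 ≤ 3 * K * (τ / h) ^ 2)
  have hτ : 3 * K * (1 + 2 * K) * τ ^ 2 / h ^ 2 = 3 * K * (1 + 2 * K) * (τ / h) ^ 2 := by
    rw [div_pow, mul_div_assoc]
  rw [hτ, Lminus, hsplit]
  linarith

/-- The energy balance at a fixed velocity. -/
theorem energy_le_of_steps {k : ℕ} {D : ℝ} {f g r j : PW N}
    (hD : ∀ (g w : PW N), degLE k g → degLE k w → ∀ τ : ℝ,
      -(τ * Lminus g w) ≤ (inner2 w w + D * τ ^ 2 / msize N ^ 2 * inner2 g g) / 2)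
    (hf : degLE k f) (hg : degLE k g) (hr : degLE k r)
    {ε lam Δt v : ℝ} (hε : 0 < ε) (hε1 : ε < 1) (hΔt : 0 < Δt)
    (hrelax : ∀ η : PW N, degLE k η → Δt⁻¹ * inner2 (g - j) η =
      -(lam / ε ^ 2) * inner2 g η - ((1 - ε ^ 2) / ε ^ 2) * v * Lplus f η)
    (htrans : ∀ ξ : PW N, degLE k ξ → Δt⁻¹ * inner2 (r - f) ξ + v * Lminus g ξ = 0) :
    inner2 r r + ε ^ 2 / (1 - ε ^ 2) * inner2 g g ≤
      inner2 f f + ε ^ 2 / (1 - ε ^ 2) * inner2 j j +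
        (D * (Δt * v) ^ 2 / msize N ^ 2 - 2 * lam * Δt / (1 - ε ^ 2)) * inner2 g g := by
  have hε2 : 0 < 1 - ε ^ 2 := by nlinarith
  have hw := degLE_sub hr hf
  have htrans' (ξ : PW N) (hξ : degLE k ξ) : inner2 (r - f) ξ = -(Δt * v * Lminus g ξ) := by
    have := htrans ξ hξ
    field_simp at this
    linarith
  have hrelax' : ε ^ 2 / (1 - ε ^ 2) * inner2 (g - j) g =
      -(lam * Δt / (1 - ε ^ 2) * inner2 g g) - Δt * v * Lplus f g := by
    have := hrelax g hg
    field_simp at this ⊢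
    linarith
  have h1 := htrans' f hf
  have h2 := htrans' (r - f) hw
  have h3 := hD g (r - f) hg hw (Δt * v)
  have h4 := mul_nonneg (by positivity : 0 ≤ ε ^ 2 / (1 - ε ^ 2)) (inner2_self_nonneg (g - j))
  rw [Lminus_eq_neg_Lplus] at h1
  rw [← h2] at h3
  have e : 2 * lam * Δt / (1 - ε ^ 2) = 2 * (lam * Δt / (1 - ε ^ 2)) := by ring
  rw [e]
  simp only [inner2_sub_left, inner2_sub_right] at h1 h3 h4 hrelax'
  rw [inner2_comm f r] at h3
  rw [inner2_comm j g] at h4 hrelax'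
  linarith

/-! ### Functions of discrete ansatz form -/

variable {Nv : ℕ}

/-- The polynomial in the velocity, with the Maxwellian factor removed, obtained by fixing the
cell and the position. -/
def slice (c : Ansatz N Nv) (i : Fin N) (x : ℝ) : ℝ[X] :=
  ∑ ℓ : Fin (Nv + 1), C ((c ℓ i).eval x) * X ^ (ℓ : ℕ)

/-- The polynomial in the velocity obtained by integrating `slice c i x ^ 2` over `Ω_x`. -/
def energyPoly (c : Ansatz N Nv) : ℝ[X] :=
  ∑ ℓ : Fin (Nv + 1), ∑ m : Fin (Nv + 1), C (inner2 (c ℓ) (c m)) * X ^ (ℓ + m : ℕ)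

theorem natDegree_slice_le (c : Ansatz N Nv) (i : Fin N) (x : ℝ) :
    (slice c i x).natDegree ≤ Nv :=
  natDegree_sum_le_of_forall_le _ _ fun ℓ _ =>
    (natDegree_C_mul_X_pow_le _ _).trans (Nat.lt_succ_iff.mp ℓ.isLt)

theorem eval_aAt (c : Ansatz N Nv) (v : ℝ) (i : Fin N) (x : ℝ) :
    (aAt c v i).eval x = Mw v * (slice c i x).eval v := by
  simp only [aAt, slice, eval_mul, eval_C, eval_finsetSum, eval_pow, eval_X]
  simp only [mul_comm]

theorem degLE_aAt {k : ℕ} {c : Ansatz N Nv} (hc : AdegLE k c) (v : ℝ) : degLE k (aAt c v) := by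
  intro i
  have hC (a : ℝ) (p : ℝ[X]) (hp : p.degree ≤ k) : (C a * p).degree ≤ k := by
    rw [← smul_eq_C_mul]
    exact (degree_smul_le a p).trans hp
  exact hC _ _ ((degree_sum_le _ _).trans (Finset.sup_le fun ℓ _ => hC _ _ (hc ℓ i)))

theorem map_slice_sq (Φ : ℝ[X] →ₗ[ℝ] ℝ) (c : Ansatz N Nv) (i : Fin N) (x : ℝ) :
    Φ (slice c i x ^ 2) = ∑ ℓ : Fin (Nv + 1), ∑ m : Fin (Nv + 1),
      (c ℓ i).eval x * (c m i).eval x * Φ (X ^ (ℓ + m : ℕ)) := by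
  rw [sq, slice, Finset.sum_mul_sum]
  simp only [map_sum]
  refine Finset.sum_congr rfl fun ℓ _ => Finset.sum_congr rfl fun m _ => ?_
  rw [← smul_eq_mul (_ * _) (Φ _), ← map_smul, smul_eq_C_mul, C_mul, pow_add]
  congr 1
  ring

theorem continuous_map_slice_sq (Φ : ℝ[X] →ₗ[ℝ] ℝ) (c : Ansatz N Nv) (i : Fin N) :
    Continuous fun x => Φ (slice c i x ^ 2) := by
  simp only [map_slice_sq]
  fun_prop

theorem sum_integral_map_slice_sq (Φ : ℝ[X] →ₗ[ℝ] ℝ) (c : Ansatz N Nv) :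
    ∑ i : Fin N, ∫ x in ((i.val : ℝ) * msize N)..(((i.val : ℝ) + 1) * msize N),
      Φ (slice c i x ^ 2) = Φ (energyPoly c) := by
  have hint (i : Fin N) : ∫ x in ((i.val : ℝ) * msize N)..(((i.val : ℝ) + 1) * msize N),
      Φ (slice c i x ^ 2) = ∑ ℓ : Fin (Nv + 1), ∑ m : Fin (Nv + 1),
        (∫ x in ((i.val : ℝ) * msize N)..(((i.val : ℝ) + 1) * msize N),
          (c ℓ i).eval x * (c m i).eval x) * Φ (X ^ (ℓ + m : ℕ)) := by
    simp only [map_slice_sq]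
    rw [intervalIntegral.integral_finsetSum fun ℓ _ =>
      Continuous.intervalIntegrable (by fun_prop) _ _]
    refine Finset.sum_congr rfl fun ℓ _ => ?_
    rw [intervalIntegral.integral_finsetSum fun m _ =>
      Continuous.intervalIntegrable (by fun_prop) _ _]
    exact Finset.sum_congr rfl fun m _ => intervalIntegral.integral_mul_const _ _
  simp only [hint, energyPoly, map_sum, ← smul_eq_C_mul, map_smul, smul_eq_mul, inner2,
    Finset.sum_mul]
  rw [Finset.sum_comm]
  exact Finset.sum_congr rfl fun ℓ _ => Finset.sum_comm

theorem inner2_aAt_self (c : Ansatz N Nv) (v : ℝ) :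
    inner2 (aAt c v) (aAt c v) = Mw v ^ 2 * (energyPoly c).eval v := by
  have h := sum_integral_map_slice_sq (leval v) c
  simp only [leval_apply, eval_pow] at h
  rw [← h, inner2, Finset.mul_sum]
  simp only [eval_aAt, ← sq, mul_pow, intervalIntegral.integral_const_mul]

theorem nrmSq_eq (lam : ℝ) (c : Ansatz N Nv) :
    nrmSq lam c = lam * gaussianMean (energyPoly c) := by
  rw [← sum_integral_map_slice_sq, nrmSq, Finset.mul_sum]
  refine Finset.sum_congr rfl fun i _ => ?_
  rw [← intervalIntegral.integral_const_mul]
  congr 1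
  funext x
  rw [gaussianMean_apply, ← integral_const_mul]
  congr 1
  funext v
  have := (Mw_pos v).ne'
  rw [eval_aAt, eval_pow]
  field_simp

theorem gaussianMean_energyPoly_nonneg (c : Ansatz N Nv) : 0 ≤ gaussianMean (energyPoly c) := by
  rw [← sum_integral_map_slice_sq]
  exact Finset.sum_nonneg fun i _ =>
    intervalIntegral.integral_nonneg (cell_le i) fun _ _ => gaussianMean_sq_nonneg _

theorem gaussianMean_energyPoly_mul_X_sq_le (c : Ansatz N Nv) :
    gaussianMean (energyPoly c * X ^ 2) ≤ 2 * (2 * Nv + 1) * gaussianMean (energyPoly c) := by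
  have h := sum_integral_map_slice_sq (gaussianMean ∘ₗ LinearMap.mulRight ℝ (X ^ 2)) c
  have hcont := continuous_map_slice_sq (gaussianMean ∘ₗ LinearMap.mulRight ℝ (X ^ 2)) c
  simp only [LinearMap.comp_apply, LinearMap.mulRight_apply] at h hcont
  rw [← h, ← sum_integral_map_slice_sq, Finset.mul_sum]
  refine Finset.sum_le_sum fun i _ => ?_
  rw [← intervalIntegral.integral_const_mul]
  refine intervalIntegral.integral_mono_on (cell_le i) ((hcont i).intervalIntegrable _ _)
    (((continuous_map_slice_sq gaussianMean c i).const_mul _).intervalIntegrable _ _)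
    fun x _ => gaussianMean_X_sq_mul_sq_le Nv _ (natDegree_slice_le c i x)

/-- **Lemma 4.3: energy estimate for the relaxation–transport half steps.**
For every `k` there exist positive constants `C_i, C_t` depending only on `k` such that,
for all data of discrete ansatz form satisfying the relaxation step for `j*` and the
forward-Euler transport step for `r^{n+1}`, under the CFL condition
`Δt/h² ≤ λ/((1−ε²)(C_i + 4C_t²)(2N_v+1))` one has
`|||r^{n+1}|||² + (ε²/(1−ε²))|||j*|||² ≤ |||r*|||² + (ε²/(1−ε²))|||jⁿ|||²`. -/
theorem relaxation_transport_energy_estimate (k : ℕ) :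
    ∃ Ci Ct : ℝ, 0 < Ci ∧ 0 < Ct ∧
      ∀ (Nv N : ℕ), 0 < N → ∀ (ε lam Δt : ℝ), 0 < ε → ε < 1 → 0 < lam → 0 < Δt →
      ∀ (rs jn js rn1 : Ansatz N Nv),
        AdegLE k rs → AdegLE k jn → AdegLE k js → AdegLE k rn1 →
        -- (i) relaxation step for the odd parity:
        -- ((j* − jⁿ)/Δt, η) = −(λ/ε²)(j*, η) − ((1−ε²)/ε²)·v·L⁺(r*, η) for all η ∈ V_h^k
        (∀ v : ℝ, ∀ η : PW N, degLE k η →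
          Δt⁻¹ * inner2 (fun i => aAt js v i - aAt jn v i) η =
            -(lam / ε ^ 2) * inner2 (aAt js v) η
              - ((1 - ε ^ 2) / ε ^ 2) * v * Lplus (aAt rs v) η) →
        -- (ii) transport step for the even parity:
        -- ((r^{n+1} − r*)/Δt, ξ) + v·L⁻(j*, ξ) = 0 for all ξ ∈ V_h^k
        (∀ v : ℝ, ∀ ξ : PW N, degLE k ξ →
          Δt⁻¹ * inner2 (fun i => aAt rn1 v i - aAt rs v i) ξ
            + v * Lminus (aAt js v) ξ = 0) →
        -- CFL condition
        Δt / (msize N) ^ 2 ≤ lam / ((1 - ε ^ 2) * (Ci + 4 * Ct ^ 2) * (2 * (Nv : ℝ) + 1)) →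
        nrmSq lam rn1 + ε ^ 2 / (1 - ε ^ 2) * nrmSq lam js
          ≤ nrmSq lam rs + ε ^ 2 / (1 - ε ^ 2) * nrmSq lam jn := by
  obtain ⟨D, hD, hbound⟩ := exists_neg_Lminus_le k
  refine ⟨D, 1, hD, one_pos, ?_⟩
  intro Nv N hN ε lam Δt hε hε1 hlam hΔt rs jn js rn1 hrs hjn hjs hrn1 hrelax htrans hcfl
  have hε2 : 0 < 1 - ε ^ 2 := by nlinarith
  have hh := msize_pos hN
  set e := ε ^ 2 / (1 - ε ^ 2) with he
  set α := D * Δt ^ 2 / msize N ^ 2 with hα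
  set β := 2 * lam * Δt / (1 - ε ^ 2) with hβ
  have hmean : 0 ≤ gaussianMean (energyPoly rs + e • energyPoly jn
      + α • (energyPoly js * X ^ 2) - β • energyPoly js
      - energyPoly rn1 - e • energyPoly js) := by
    refine gaussianMean_nonneg fun v => ?_
    have h := energy_le_of_steps (hbound N hN) (degLE_aAt hrs v) (degLE_aAt hjs v)
      (degLE_aAt hrn1 v) hε hε1 hΔt (hrelax v) (htrans v)
    simp only [inner2_aAt_self] at h
    have hM : 0 < Mw v ^ 2 := pow_pos (Mw_pos v) 2
    have hαv : D * (Δt * v) ^ 2 / msize N ^ 2 = α * v ^ 2 := by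
      rw [hα]
      ring
    rw [hαv, ← he, ← hβ] at h
    simp only [eval_add, eval_sub, eval_smul, eval_mul, eval_pow, eval_X, smul_eq_mul]
    refine nonneg_of_mul_nonneg_right ?_ hM
    linarith
  simp only [map_add, map_sub, map_smul, smul_eq_mul] at hmean
  have hmoment := gaussianMean_energyPoly_mul_X_sq_le js
  have hjs0 := gaussianMean_energyPoly_nonneg js
  have hα0 : 0 ≤ α := by positivity
  have hcoef : α * (2 * (2 * Nv + 1)) ≤ β := by
    have hNv : (0 : ℝ) < 2 * Nv + 1 := by positivity
    rw [le_div_iff₀ (by positivity)] at hcfl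
    have hs : Δt / msize N ^ 2 * ((1 - ε ^ 2) * D * (2 * Nv + 1)) ≤ lam := by
      refine le_trans ?_ hcfl
      gcongr
      norm_num
    rw [hβ, le_div_iff₀ hε2]
    calc α * (2 * (2 * Nv + 1)) * (1 - ε ^ 2)
        = 2 * Δt * (Δt / msize N ^ 2 * ((1 - ε ^ 2) * D * (2 * Nv + 1))) := by
          rw [hα]
          ring
      _ ≤ 2 * Δt * lam := by gcongr
      _ = 2 * lam * Δt := by ring
  have hmain : gaussianMean (energyPoly rn1) + e * gaussianMean (energyPoly js) ≤
      gaussianMean (energyPoly rs) + e * gaussianMean (energyPoly jn) := by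
    have h1 := mul_le_mul_of_nonneg_left hmoment hα0
    have h2 := mul_le_mul_of_nonneg_right hcoef hjs0
    linarith
  simp only [nrmSq_eq]
  nlinarith [mul_le_mul_of_nonneg_left hmain hlam.le]

end APDG
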